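/- arXiv:2007.05935 — 2 statements merged into one kernel-verified Lean document; each statement's English description precedes it below -/
import Mathlib

section
/- For every regular cardinal κ ≥ ω₂, the relation κ ↛^poly (κ-cl)²_{2-bdd} holds; that is, there exists a normal 2-bounded coloring f : [κ]² → κ such that no closed subset of κ of order type κ is f-rainbow. -/
open Set Cardinal Ordinal

universe u

/-- `A` has order type `θ`: there is an order isomorphism from `Iio θ` onto `A`. -/
def HasOType (A : Set Ordinal.{u}) (θ : Ordinal.{u}) : Prop :=
  Nonempty (Set.Iio θ ≃o A)

/-- The order type of `A` is at most `γ`: `A` order-embeds into `Iio γ`. -/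
def OTypeLE (A : Set Ordinal.{u}) (γ : Ordinal.{u}) : Prop :=
  Nonempty (A ↪o Set.Iio γ)

/-- `A` is `f`-rainbow: `f` is injective on increasing pairs from `A`. -/
def IsRainbow (f : Ordinal → Ordinal → Ordinal) (A : Set Ordinal) : Prop :=
  ∀ α ∈ A, ∀ β ∈ A, ∀ γ ∈ A, ∀ δ ∈ A,
    α < β → γ < δ → f α β = f γ δ → α = γ ∧ β = δ

/-- `f` is a normal coloring on pairs below `κ`: equal colors force equal top points. -/
def IsNormalColoring (f : Ordinal → Ordinal → Ordinal) (κ : Ordinal) : Prop :=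
  ∀ α β γ δ : Ordinal, α < β → β < κ → γ < δ → δ < κ → f α β = f γ δ → β = δ

/-- `f` is 2-bounded: every fiber of `f` on pairs below `κ` has at most two elements. -/
def TwoBounded (f : Ordinal → Ordinal → Ordinal) (κ : Ordinal) : Prop :=
  ∀ ξ : Ordinal, {p : Ordinal × Ordinal | p.1 < p.2 ∧ p.2 < κ ∧ f p.1 p.2 = ξ}.encard ≤ 2

/-- `f` is `<ω`-bounded: every fiber of `f` on pairs below `κ` is finite. -/
def FinBounded (f : Ordinal → Ordinal → Ordinal) (κ : Ordinal) : Prop :=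
  ∀ ξ : Ordinal, {p : Ordinal × Ordinal | p.1 < p.2 ∧ p.2 < κ ∧ f p.1 p.2 = ξ}.Finite

/-- `f` is `ω`-bounded: every fiber of `f` on pairs below `κ` is countable. -/
def OmegaBounded (f : Ordinal → Ordinal → Ordinal) (κ : Ordinal) : Prop :=
  ∀ ξ : Ordinal, {p : Ordinal × Ordinal | p.1 < p.2 ∧ p.2 < κ ∧ f p.1 p.2 = ξ}.Countable

/-- `A` is a closed set of ordinals: any nonzero `α` below `sup A` which is the
supremum of the elements of `A` below it belongs to `A`. -/
def IsClosedSet (A : Set Ordinal) : Prop :=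
  ∀ α : Ordinal, α < sSup A → α ≠ 0 → sSup (A ∩ Set.Iio α) = α → α ∈ A

/-- `C` is club in `δ`: a subset of `δ`, unbounded in `δ`, and closed below `δ`. -/
def IsClubIn (C : Set Ordinal) (δ : Ordinal) : Prop :=
  C ⊆ Set.Iio δ ∧ (∀ α < δ, ∃ β ∈ C, α ≤ β) ∧
  ∀ α : Ordinal, α < δ → α ≠ 0 → sSup (C ∩ Set.Iio α) = α → α ∈ C

/-- `A` is stationary in `δ`: it meets every club in `δ`. -/
def IsStationaryIn (A : Set Ordinal) (δ : Ordinal) : Prop :=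
  ∀ C : Set Ordinal, IsClubIn C δ → (A ∩ C).Nonempty

/-- `f` is `<bd`-type bounded on pairs below `κ`: some `γ < bd` bounds the order
type of every color class `t_{ηβ} = {ξ < β | f ξ β = f η β}`. -/
def TypeBounded (f : Ordinal → Ordinal → Ordinal) (κ bd : Ordinal) : Prop :=
  ∃ γ < bd, ∀ η β : Ordinal, η < β → β < κ →
    OTypeLE {ξ : Ordinal | ξ < β ∧ f ξ β = f η β} γ

/-- `f` is `<bd`-type bounded relative to the set `A`. -/
def TypeBoundedOn (f : Ordinal → Ordinal → Ordinal) (A : Set Ordinal) (bd : Ordinal) : Prop :=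
  ∃ γ < bd, ∀ η ∈ A, ∀ β ∈ A, η < β →
    OTypeLE {ξ : Ordinal | ξ ∈ A ∧ ξ < β ∧ f ξ β = f η β} γ

/-!
There are fixed functions `a` and `b` such that every club `C` contains `δ`, `a δ` and `b δ` for
some `δ` with `a δ < b δ < δ`. Giving `{a δ, δ}` and `{b δ, δ}` the same color, for all `δ` and
with no other coincidence, then leaves no club rainbow. To find `a` and `b`, fix a ladder `c δ`
converging to each `δ` of cofinality `ω` and, for a club `E`, consider the guesses sending `δ` to
`sup (E ∩ [0, c δ n])` for two values of `n`. If these guesses failed for every club `E`, then `E`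
could be shrunk `ω` times, each time into clubs witnessing the failures for the previous one. But
the suprema only decrease as `E` shrinks, so at a limit `δ` of the intersection they stabilize;
from then on they lie in the next club, which contradicts its choice.
-/

section Guessing

variable {α : Type*} [LinearOrder α]

/-- The sequence `s` is a ladder converging to `δ`: it runs through points below `δ` and is
cofinal in them. It need not be monotone. -/
def IsLadder (s : ℕ → α) (δ : α) : Prop :=
  (∀ n, s n < δ) ∧ ∀ x < δ, ∃ n, x < s n

/-- The ladder system: a choice of a ladder at each point that has one, with arbitrary values at
the other points. -/
noncomputable def ladder [Nonempty α] (δ : α) : ℕ → α :=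
  Classical.epsilon (IsLadder · δ)

lemma isLadder_ladder [Nonempty α] {s : ℕ → α} {δ : α} (hs : IsLadder s δ) :
    IsLadder (ladder δ) δ :=
  Classical.epsilon_spec (p := (IsLadder · δ)) ⟨s, hs⟩

/-- The pair of functions `(a, b)` guesses the set `C`: some `δ ∈ C` has `a δ < b δ < δ` with both
values in `C`. -/
def GuessesPair (a b : α → α) (C : Set α) : Prop :=
  ∃ δ, {a δ, b δ, δ} ⊆ C ∧ a δ < b δ ∧ b δ < δ

lemma GuessesPair.mono {a b : α → α} {C D : Set α} (h : GuessesPair a b C) (hCD : C ⊆ D) :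
    GuessesPair a b D :=
  let ⟨δ, hδ, hlt⟩ := h
  ⟨δ, hδ.trans hCD, hlt⟩

lemma bddAbove_range_of_aleph0_lt_cof (hα : ℵ₀ < Order.cof α) (s : ℕ → α) : BddAbove (range s) :=
  .of_not_isCofinal fun h ↦
    (Order.cof_le h).not_gt <| hα.trans_le' <| by simpa using mk_range_le_lift (f := s)

variable [WellFoundedLT α] [Nonempty α]

attribute [local instance]
  WellFoundedLT.toOrderBot WellFoundedLT.conditionallyCompleteLinearOrderBot

lemma exists_isLadder_of_isClub (hα : ℵ₀ < Order.cof α) {C : Set α} (hC : IsClub C) :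
    ∃ δ ∈ C, ∃ s, IsLadder s δ ∧ ∀ n, s n ∈ C := by
  have : NoMaxOrder α :=
    noTopOrder_iff_noMaxOrder α |>.1 <| Order.one_lt_cof_iff.1 <| one_lt_aleph0.trans hα
  have : Nonempty C := hC.nonempty.to_subtype
  have : NoMaxOrder C := ⟨fun x ↦
    let ⟨y, hxy⟩ := exists_gt (x : α)
    let ⟨z, hz, hyz⟩ := hC.isCofinal y
    ⟨⟨z, hz⟩, hxy.trans_le hyz⟩⟩
  obtain ⟨s, hs⟩ := Nat.exists_strictMono C
  have hbdd := bddAbove_range_of_aleph0_lt_cof hα fun n ↦ (s n : α)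
  refine ⟨⨆ n, (s n : α), hC.csSup_mem (by grind) (range_nonempty _) hbdd, fun n ↦ s n,
    ⟨fun n ↦ ?_, fun x hx ↦ exists_lt_of_lt_ciSup hx⟩, fun n ↦ (s n).2⟩
  exact (Subtype.coe_lt_coe.2 <| hs n.lt_succ_self).trans_le (le_ciSup hbdd (n + 1))

/-- The last point of `E` at or before `x`, when `E` is closed and has a point there; the least
element of the order when it has none. -/
noncomputable def lastPoint (E : Set α) (x : α) : α :=
  sSup (E ∩ Iic x)

lemma lastPoint_le (E : Set α) (x : α) : lastPoint E x ≤ x :=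
  csSup_le' fun _ hy ↦ hy.2

lemma le_lastPoint {E : Set α} {x y : α} (hy : y ∈ E) (hyx : y ≤ x) : y ≤ lastPoint E x :=
  le_csSup (bddAbove_Iic.mono inter_subset_right) ⟨hy, hyx⟩

lemma lastPoint_mem {E : Set α} (hE : IsClub E) {x y : α} (hy : y ∈ E) (hyx : y ≤ x) :
    lastPoint E x ∈ E :=
  hE.csSup_mem inter_subset_left ⟨y, hy, hyx⟩ (bddAbove_Iic.mono inter_subset_right)

lemma monotone_lastPoint (x : α) : Monotone (lastPoint · x : Set α → α) := fun _ _ h ↦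
  csSup_le_csSup' (bddAbove_Iic.mono inter_subset_right) (inter_subset_inter_left _ h)

lemma exists_lastPoint_eq_succ {E : ℕ → Set α} (hE : Antitone E) (x y : α) :
    ∃ k, lastPoint (E k) x = lastPoint (E (k + 1)) x ∧
      lastPoint (E k) y = lastPoint (E (k + 1)) y := by
  have hanti : Antitone fun k ↦ (lastPoint (E k) x, lastPoint (E k) y) := fun _ _ h ↦
    ⟨monotone_lastPoint x (hE h), monotone_lastPoint y (hE h)⟩
  obtain ⟨k, hk⟩ := WellFoundedLT.antitone_chain_condition hanti
  exact ⟨k, Prod.ext_iff.1 (hk (k + 1) k.le_succ)⟩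

lemma exists_guessesPair_lastPoint_ladder (hα : ℵ₀ < Order.cof α) {E : ℕ → Set α}
    (hclub : ∀ k, IsClub (E k)) (hE : Antitone E) :
    ∃ k m n, GuessesPair (fun δ ↦ lastPoint (E k) (ladder δ m))
      (fun δ ↦ lastPoint (E k) (ladder δ n)) (E (k + 1)) := by
  obtain ⟨δ, hδ, s, hs, hsE⟩ :=
    exists_isLadder_of_isClub hα (IsClub.iInter_of_countable hα.ne' hclub)
  replace hδ := mem_iInter.1 hδ
  replace hsE := fun i ↦ mem_iInter.1 (hsE i)
  have hladder := isLadder_ladder hs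
  obtain ⟨m, hm⟩ := hladder.2 (s 0) (hs.1 0)
  obtain ⟨i, hi⟩ := hs.2 (ladder δ m) (hladder.1 m)
  obtain ⟨n, hn⟩ := hladder.2 (s i) (hs.1 i)
  obtain ⟨k, hkm, hkn⟩ := exists_lastPoint_eq_succ hE (ladder δ m) (ladder δ n)
  refine ⟨k, m, n, δ, ?_, ?_, ?_⟩
  · rintro _ (rfl | rfl | rfl)
    · exact mem_of_eq_of_mem hkm <| lastPoint_mem (hclub _) (hsE 0 _) hm.le
    · exact mem_of_eq_of_mem hkn <| lastPoint_mem (hclub _) (hsE i _) hn.le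
    · exact hδ _
  · calc lastPoint (E k) (ladder δ m) ≤ ladder δ m := lastPoint_le _ _
      _ < s i := hi
      _ ≤ lastPoint (E k) (ladder δ n) := le_lastPoint (hsE i k) hn.le
  · exact (lastPoint_le _ _).trans_lt (hladder.1 n)

theorem exists_guessesPair_of_isClub (hα : ℵ₀ < Order.cof α) :
    ∃ a b : α → α, ∀ C, IsClub C → GuessesPair a b C := by
  by_contra! h
  choose D hD hDguess using h
  let guess (S : Set α) (n : ℕ) (δ : α) : α := lastPoint S (ladder δ n)
  let E : ℕ → Set α :=
    Nat.rec univ fun _ S ↦ S ∩ ⋂ p : ℕ × ℕ, D (guess S p.1) (guess S p.2)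
  have hclub (k : ℕ) : IsClub (E k) := by
    induction k with
    | zero => exact .univ
    | succ k ih => exact ih.inter hα.ne' (.iInter_of_countable hα.ne' fun _ ↦ hD _ _)
  have hE : Antitone E := antitone_nat_of_succ_le fun _ ↦ inter_subset_left
  obtain ⟨k, m, n, hguess⟩ := exists_guessesPair_lastPoint_ladder hα hclub hE
  exact hDguess _ _ <|
    hguess.mono (inter_subset_right.trans (iInter_subset _ (m, n)))

end Guessing

section Coloring

variable {α : Type*} [DecidableEq α]

/-- The coloring of pairs `(x, z)` that assigns to `(b z, z)` the color of `(a z, z)` and makes no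
other identification. Colors are themselves pairs. -/
def mergeColoring (a b : α → α) (p : α × α) : α × α :=
  (Function.update id (b p.2) (a p.2) p.1, p.2)

lemma mergeColoring_eq (a b : α → α) (z : α) :
    mergeColoring a b (a z, z) = mergeColoring a b (b z, z) := by
  by_cases h : a z = b z <;> simp [mergeColoring, h]

lemma encard_mergeColoring_fiber_le (a b : α → α) (c : α × α) :
    {p | mergeColoring a b p = c}.encard ≤ 2 := by
  have hsub : {p | mergeColoring a b p = c} ⊆ {c, (b c.2, c.2)} := by
    rintro ⟨x, z⟩ rfl
    by_cases hx : x = b z <;> simp [mergeColoring, hx]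
  calc {p | mergeColoring a b p = c}.encard ≤ ({c, (b c.2, c.2)} : Set (α × α)).encard :=
        encard_le_encard hsub
    _ ≤ 1 + 1 := (encard_insert_le _ _).trans_eq <| by rw [encard_singleton]
    _ = 2 := one_add_one_eq_two

end Coloring

lemma exists_injective_prod (α : Type*) [Infinite α] : ∃ g : α × α → α, g.Injective := by
  have h : #(α × α) ≤ #α := (mul_eq_self (aleph0_le_mk α)).le.trans_eq' (mul_def α α).symm
  exact ⟨h.some, h.some.injective⟩

theorem exists_coloring_of_aleph0_lt_cof {α : Type*} [LinearOrder α] [WellFoundedLT α]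
    (hα : ℵ₀ < Order.cof α) :
    ∃ F : α × α → α, (∀ p q, F p = F q → p.2 = q.2) ∧ (∀ c, {p | F p = c}.encard ≤ 2) ∧
      ∀ C, IsClub C → ∃ x ∈ C, ∃ y ∈ C, ∃ z ∈ C, x < y ∧ y < z ∧ F (x, z) = F (y, z) := by
  have : Infinite α := infinite_iff.2 <| hα.le.trans (Order.cof_le_cardinalMk α)
  obtain ⟨a, b, hguess⟩ := exists_guessesPair_of_isClub hα
  obtain ⟨g, hg⟩ := exists_injective_prod α
  refine ⟨fun p ↦ g (mergeColoring a b p), fun p q h ↦ ?_, fun c ↦ ?_, fun C hC ↦ ?_⟩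
  · have hpq : mergeColoring a b p = mergeColoring a b q := hg h
    exact (congrArg Prod.snd hpq :)
  · rcases {p | g (mergeColoring a b p) = c}.eq_empty_or_nonempty with hempty | ⟨p, rfl⟩
    · rw [hempty, encard_empty]
      exact zero_le
    · simpa [hg.eq_iff] using encard_mergeColoring_fiber_le a b (mergeColoring a b p)
  · obtain ⟨δ, hδ, hab, hbδ⟩ := hguess C hC
    exact ⟨a δ, hδ (by simp), b δ, hδ (by simp), δ, hδ (by simp), hab, hbδ,
      congrArg g (mergeColoring_eq a b δ)⟩

section Ordinals

open scoped Classical in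
/-- The coloring of pairs of ordinals below `o` given by `F`, with junk value `0` elsewhere. -/
noncomputable def extendColoring {o : Ordinal.{u}} (F : Iio o × Iio o → Iio o)
    (x y : Ordinal.{u}) : Ordinal.{u} :=
  if h : x < o ∧ y < o then F (⟨x, h.1⟩, ⟨y, h.2⟩) else 0

variable {o : Ordinal.{u}} {F : Iio o × Iio o → Iio o}

@[simp]
lemma extendColoring_coe (x y : Iio o) : extendColoring F x y = F (x, y) :=
  dif_pos ⟨x.2, y.2⟩

lemma extendColoring_lt {x y : Ordinal.{u}} (hxy : x < y) (hy : y < o) :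
    extendColoring F x y < o := by
  lift x to Iio o using hxy.trans hy
  lift y to Iio o using hy
  exact (extendColoring_coe x y).trans_lt (F (x, y)).2

lemma isNormalColoring_extendColoring (hF : ∀ p q, F p = F q → p.2 = q.2) :
    IsNormalColoring (extendColoring F) o := by
  intro x y x' y' hxy hy hxy' hy' h
  lift x to Iio o using hxy.trans hy
  lift y to Iio o using hy
  lift x' to Iio o using hxy'.trans hy'
  lift y' to Iio o using hy'
  exact congrArg Subtype.val <| hF (x, y) (x', y') <| by simpa [Subtype.ext_iff] using h

lemma twoBounded_extendColoring (hF : ∀ c, {p | F p = c}.encard ≤ 2) :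
    TwoBounded (extendColoring F) o := by
  intro ξ
  set fiber := {p : Ordinal × Ordinal | p.1 < p.2 ∧ p.2 < o ∧ extendColoring F p.1 p.2 = ξ}
  obtain hempty | ⟨q, hlt, hq, hqξ⟩ := fiber.eq_empty_or_nonempty
  · simp [hempty]
  lift ξ to Iio o using hqξ ▸ extendColoring_lt hlt hq
  have hsub : fiber ⊆ Prod.map (↑) (↑) '' {p | F p = ξ} := by
    rintro ⟨x, y⟩ ⟨hxy, hy, hξ⟩
    lift x to Iio o using hxy.trans hy
    lift y to Iio o using hy
    exact ⟨(x, y), by simpa [Subtype.ext_iff] using hξ, rfl⟩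
  calc fiber.encard ≤ _ := encard_le_encard hsub
    _ ≤ {p | F p = ξ}.encard := encard_image_le _ _
    _ ≤ 2 := hF ξ

lemma isClub_preimage_of_isClubIn {C : Set Ordinal.{u}} (hC : IsClubIn C o) :
    IsClub (Subtype.val ⁻¹' C : Set (Iio o)) := by
  obtain ⟨hCo, hunbdd, hclosed⟩ := hC
  refine ⟨fun s hs hs₀ _ x hx ↦ ?_, fun x ↦ ?_⟩
  · by_contra hxC
    have hlt (y) (hy : y ∈ s) : y < x := (hx.1 hy).lt_of_ne fun h ↦ hxC (h ▸ hs hy)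
    obtain ⟨y, hy⟩ := hs₀
    refine hxC <| hclosed x x.2 (pos_of_gt (Subtype.coe_lt_coe.2 (hlt y hy))).ne' ?_
    refine csSup_eq_of_forall_le_of_forall_lt_exists_gt (nonempty_of_mem ⟨hs hy, hlt y hy⟩)
      (fun z hz ↦ hz.2.le) fun w hw ↦ ?_
    lift w to Iio o using hw.trans x.2
    obtain ⟨z, hz, hwz⟩ := (lt_isLUB_iff hx).1 hw
    exact ⟨z, ⟨hs hz, hlt z hz⟩, hwz⟩
  · obtain ⟨y, hy, hxy⟩ := hunbdd x x.2
    exact ⟨⟨y, hCo hy⟩, hy, hxy⟩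

lemma isClubIn_of_hasOType {A : Set Ordinal.{u}} (hAo : A ⊆ Iio o) (hA : IsClosedSet A)
    (htype : HasOType A o) : IsClubIn A o := by
  obtain ⟨e⟩ := htype
  have hmono : StrictMono fun x ↦ inclusion hAo (e x) := fun _ _ h ↦ e.strictMono h
  have hunbdd (x : Ordinal) (hx : x < o) : ∃ y ∈ A, x ≤ y :=
    ⟨e ⟨x, hx⟩, (e ⟨x, hx⟩).2, hmono.le_apply (x := ⟨x, hx⟩)⟩
  refine ⟨hAo, hunbdd, fun x hx hx₀ hsup ↦ ?_⟩
  obtain ⟨y, hy, hxy⟩ := hunbdd x hx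
  obtain rfl | hlt := hxy.eq_or_lt
  · exact hy
  · exact hA x (hlt.trans_le <| le_csSup (bddAbove_Iio.mono hAo) hy) hx₀ hsup

lemma aleph0_lt_cof_Iio (ho : ℵ₀ < o.cof) : ℵ₀ < Order.cof (Iio o) := by
  rwa [Ordinal.cof_Iio, ← Ordinal.lift_cof, aleph0_lt_lift]

end Ordinals

theorem stmt1_general (o : Ordinal.{u}) (ho : ℵ₀ < o.cof) :
    ∃ f : Ordinal.{u} → Ordinal.{u} → Ordinal.{u},
      (∀ α β : Ordinal, α < β → β < o → f α β < o) ∧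
      IsNormalColoring f o ∧
      TwoBounded f o ∧
      ∀ C : Set Ordinal, IsClubIn C o → ¬ IsRainbow f C := by
  obtain ⟨F, hnormal, hbdd, hclub⟩ := exists_coloring_of_aleph0_lt_cof (aleph0_lt_cof_Iio ho)
  refine ⟨extendColoring F, fun _ _ ↦ extendColoring_lt, isNormalColoring_extendColoring hnormal,
    twoBounded_extendColoring hbdd, fun C hC hrainbow ↦ ?_⟩
  obtain ⟨x, hx, y, hy, z, hz, hxy, hyz, hcolor⟩ := hclub _ (isClub_preimage_of_isClubIn hC)
  have heq : (x : Ordinal) = y :=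
    (hrainbow x hx z hz y hy z hz (hxy.trans hyz) hyz <| by simp [hcolor]).1
  exact hxy.ne (Subtype.ext heq)

/-- For every regular cardinal `κ ≥ ω₂`, `κ ↛^poly (κ-cl)²_{2-bdd}`: there is a normal
2-bounded coloring `f : [κ]² → κ` with no closed `f`-rainbow subset of order type `κ`. -/
theorem stmt1 (κ : Cardinal) (hreg : κ.IsRegular) (hκ : Cardinal.aleph 2 ≤ κ) :
    ∃ f : Ordinal → Ordinal → Ordinal,
      (∀ α β : Ordinal, α < β → β < κ.ord → f α β < κ.ord) ∧
      IsNormalColoring f κ.ord ∧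
      TwoBounded f κ.ord ∧
      ∀ A : Set Ordinal, A ⊆ Set.Iio κ.ord → IsClosedSet A →
        HasOType A κ.ord → ¬ IsRainbow f A := by
  obtain ⟨f, hlt, hnormal, hbdd, hclub⟩ := stmt1_general κ.ord <| by
    rw [hreg.cof_ord]
    exact (aleph0_lt_aleph.2 two_pos).trans_le hκ
  exact ⟨f, hlt, hnormal, hbdd, fun A hAκ hA htype ↦ hclub A (isClubIn_of_hasOType hAκ hA htype)⟩
end

section
/- Let κ, λ, μ be cardinals of uncountable cofinality and let ρ, θ be cardinals. Suppose (a) κ → (μ)²_{λ,<ρ}, i.e., for every f:[κ]²→λ there exists A⊆κ of order type μ with |f''[A]²| < ρ, and (c) μ →^poly (θ)²_{<ρ-t-bdd}. Then κ →^poly (θ)²_{<λ⁺-t-bdd}: every normal <λ⁺-type bounded coloring f:[κ]²→κ admits an f-rainbow set of order type θ. -/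
open Set Cardinal Ordinal

universe u

/-!
The rank of `α` in its colour class `t_{αβ}` depends only on `α` and `β`, so it is itself a
colouring of pairs, and if the classes have type at most `γ < λ⁺`, it takes at most `λ` values.
The first arrow yields a set of type `μ` on which fewer than `ρ` ranks occur. These ranks still
increase strictly along the colour classes relative to that set, so, once collapsed to an ordinal
below `ρ`, they bound the type of those classes, and the second arrow applies to `f` on the set.
-/

universe v w

theorem exists_injOn_mapsTo_of_mk_le {X Y : Type v} [Nonempty Y] {S : Set X} {T : Set Y}
    (h : #S ≤ #T) : ∃ j : X → Y, InjOn j S ∧ MapsTo j S T := by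
  obtain ⟨i⟩ := h
  obtain ⟨j, hj⟩ := Subtype.val_injective.surjective_comp_right (fun x : S ↦ (i x : Y))
  have hji (x : S) : j x = i x := congrFun hj x
  refine ⟨j, injOn_iff_injective.2 fun x y hxy ↦ ?_, fun x hx ↦ ?_⟩
  · exact i.injective (Subtype.ext (by rwa [← hji, ← hji]))
  · exact hji ⟨x, hx⟩ ▸ (i ⟨x, hx⟩).2

theorem exists_strictMonoOn_image_eq_range {X : Type v} {Y : Type w} [Preorder X] [Preorder Y]
    [Nonempty Y] {S : Set X} {g : S → Y} (hg : StrictMono g) :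
    ∃ e : X → Y, StrictMonoOn e S ∧ e '' S = range g := by
  obtain ⟨e, rfl⟩ := Subtype.val_injective.surjective_comp_right g
  exact ⟨e, fun a ha b hb hab ↦ @hg ⟨a, ha⟩ ⟨b, hb⟩ hab, (range_domRestrict e S).symm⟩

section OrderType

variable {S T : Set Ordinal.{u}} {γ θ : Ordinal.{u}} {ρ : Cardinal.{u}}

theorem OTypeLE.exists_strictMonoOn (h : OTypeLE S γ) :
    ∃ e : Ordinal.{u} → Ordinal.{u}, StrictMonoOn e S ∧ MapsTo e S (Iio γ) := by
  obtain ⟨i⟩ := h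
  obtain ⟨e, he, heS⟩ :=
    exists_strictMonoOn_image_eq_range ((Subtype.strictMono_coe _).comp i.strictMono)
  refine ⟨e, he, mapsTo_iff_image_subset.2 ?_⟩
  rw [heS]
  exact range_subset_iff.2 fun x ↦ (i x).2

theorem OTypeLE.of_strictMonoOn {e : Ordinal.{u} → Ordinal.{u}} (hT : OTypeLE T γ)
    (he : StrictMonoOn e S) (hST : MapsTo e S T) : OTypeLE S γ :=
  hT.map ((OrderEmbedding.ofStrictMono (hST.restrict e S T) fun a b hab ↦
    he a.2 b.2 hab).trans ·)

theorem otypeLE_iff_type_le : OTypeLE S γ ↔ typeLT S ≤ Ordinal.lift.{u + 1} γ := by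
  rw [← Ordinal.type_lt_Iio, Ordinal.type_le_iff']
  exact ⟨fun ⟨i⟩ ↦ ⟨i.ltEmbedding⟩, fun ⟨i⟩ ↦ ⟨i.orderEmbeddingOfLTEmbedding⟩⟩

theorem exists_otypeLE_of_mk_lt (h : #S < lift.{u + 1, u} ρ) : ∃ γ < ρ.ord, OTypeLE S γ := by
  have hlt : typeLT S < Ordinal.lift.{u + 1, u} ρ.ord := by
    rwa [Cardinal.lift_ord, Cardinal.lt_ord, Ordinal.card_type]
  obtain ⟨γ, hγ⟩ := Ordinal.mem_range_lift_of_le hlt.le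
  exact ⟨γ, Ordinal.lift_lt.1 (hγ.trans_lt hlt), otypeLE_iff_type_le.2 hγ.ge⟩

theorem HasOType.exists_strictMonoOn_image_eq (h : HasOType S θ) :
    ∃ E : Ordinal.{u} → Ordinal.{u}, StrictMonoOn E (Iio θ) ∧ E '' Iio θ = S := by
  obtain ⟨o⟩ := h
  obtain ⟨E, hE, hES⟩ :=
    exists_strictMonoOn_image_eq_range ((Subtype.strictMono_coe _).comp o.strictMono)
  exact ⟨E, hE, by rw [hES, o.surjective.range_comp, Subtype.range_coe]⟩

theorem HasOType.image {E : Ordinal.{u} → Ordinal.{u}} (h : HasOType S θ)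
    (hE : StrictMonoOn E S) : HasOType (E '' S) θ :=
  h.map (·.trans (hE.orderIso E S))

end OrderType

/-- The set `g''[A]²` of colours that `g` gives to the increasing pairs from `A`. -/
def pairImage {ι : Type v} {X : Type w} [LT ι] (g : ι → ι → X) (A : Set ι) : Set X :=
  {c | ∃ α ∈ A, ∃ β ∈ A, α < β ∧ g α β = c}

section PairImage

variable {ι X : Type*} [LT ι] {g : ι → ι → X} {A : Set ι}

theorem pairImage_comp {Y : Type*} (j : X → Y) :
    pairImage (fun α β ↦ j (g α β)) A = j '' pairImage g A := by
  ext c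
  constructor
  · rintro ⟨α, hα, β, hβ, hαβ, rfl⟩
    exact ⟨g α β, ⟨α, hα, β, hβ, hαβ, rfl⟩, rfl⟩
  · rintro ⟨_, ⟨α, hα, β, hβ, hαβ, rfl⟩, rfl⟩
    exact ⟨α, hα, β, hβ, hαβ, rfl⟩

theorem pairImage_mono {B : Set ι} (hAB : A ⊆ B) : pairImage g A ⊆ pairImage g B :=
  fun _ ⟨α, hα, β, hβ, h⟩ ↦ ⟨α, hAB hα, β, hAB hβ, h⟩

theorem pairImage_subset_image2 : pairImage g A ⊆ image2 g A A := by
  rintro _ ⟨α, hα, β, hβ, -, rfl⟩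
  exact mem_image2_of_mem hα hβ

theorem pairImage_subset_pairImage_image {σ τ : Type*} [Preorder σ] [Preorder τ]
    {g : τ → τ → X} {E : σ → τ} {B : Set σ} (hE : StrictMonoOn E B) :
    pairImage (fun α β ↦ g (E α) (E β)) B ⊆ pairImage g (E '' B) := by
  rintro _ ⟨α, hα, β, hβ, hαβ, rfl⟩
  exact ⟨E α, mem_image_of_mem E hα, E β, mem_image_of_mem E hβ, hE hα hβ hαβ, rfl⟩

theorem mem_pairImage_Iio {ι : Type*} [Preorder ι] {g : ι → ι → X} {α β κ : ι}
    (hαβ : α < β) (hβ : β < κ) : g α β ∈ pairImage g (Iio κ) :=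
  ⟨α, hαβ.trans hβ, β, hβ, hαβ, rfl⟩

theorem mk_pairImage_le {ι X : Type v} [LT ι] {g : ι → ι → X} {A : Set ι} (hA : ℵ₀ ≤ #A) :
    #(pairImage g A) ≤ #A :=
  calc #(pairImage g A) ≤ #(image2 g A A) := mk_le_mk_of_subset pairImage_subset_image2
    _ ≤ #A * #A := mk_image2_le
    _ = #A := mul_eq_self hA

end PairImage

section Coloring

variable {f : Ordinal.{u} → Ordinal.{u} → Ordinal.{v}} {κ μ bd : Ordinal.{u}}

theorem IsNormalColoring.comp_injOn {j : Ordinal.{v} → Ordinal.{w}} (hf : IsNormalColoring f κ)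
    (hj : InjOn j (pairImage f (Iio κ))) : IsNormalColoring (fun α β ↦ j (f α β)) κ :=
  fun α β γ δ hαβ hβ hγδ hδ h ↦ hf α β γ δ hαβ hβ hγδ hδ
    (hj (mem_pairImage_Iio hαβ hβ) (mem_pairImage_Iio hγδ hδ) h)

theorem IsNormalColoring.comp_strictMonoOn {E : Ordinal.{u} → Ordinal.{u}}
    (hf : IsNormalColoring f κ) (hE : StrictMonoOn E (Iio μ)) (hEκ : MapsTo E (Iio μ) (Iio κ)) :
    IsNormalColoring (fun α β ↦ f (E α) (E β)) μ :=
  fun _ _ _ _ hαβ hβ hγδ hδ h ↦ hE.injOn hβ hδ <| hf _ _ _ _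
    (hE (hαβ.trans hβ) hβ hαβ) (hEκ hβ) (hE (hγδ.trans hδ) hδ hγδ) (hEκ hδ) h

theorem TypeBounded.comp_injOn {j : Ordinal.{v} → Ordinal.{w}} (hf : TypeBounded f κ bd)
    (hj : InjOn j (pairImage f (Iio κ))) : TypeBounded (fun α β ↦ j (f α β)) κ bd := by
  obtain ⟨γ, hγ, hcls⟩ := hf
  refine ⟨γ, hγ, fun η β hη hβ ↦ (hcls η β hη hβ).of_strictMonoOn strictMonoOn_id ?_⟩
  rintro ξ ⟨hξ, h⟩
  exact ⟨hξ, hj (mem_pairImage_Iio hξ hβ) (mem_pairImage_Iio hη hβ) h⟩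

theorem IsRainbow.of_comp {j : Ordinal.{v} → Ordinal.{w}} {B : Set Ordinal.{u}}
    (hB : IsRainbow (fun α β ↦ j (f α β)) B) : IsRainbow f B :=
  fun α hα β hβ γ hγ δ hδ hαβ hγδ h ↦ hB α hα β hβ γ hγ δ hδ hαβ hγδ (congrArg j h)

theorem IsRainbow.image {E : Ordinal.{u} → Ordinal.{u}} {B : Set Ordinal.{u}}
    (hB : IsRainbow (fun α β ↦ f (E α) (E β)) B) (hE : StrictMonoOn E B) :
    IsRainbow f (E '' B) := by
  rintro _ ⟨α, hα, rfl⟩ _ ⟨β, hβ, rfl⟩ _ ⟨γ, hγ, rfl⟩ _ ⟨δ, hδ, rfl⟩ hαβ hγδ h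
  obtain ⟨rfl, rfl⟩ := hB α hα β hβ γ hγ δ hδ ((hE.lt_iff_lt hα hβ).1 hαβ)
    ((hE.lt_iff_lt hγ hδ).1 hγδ) h
  exact ⟨rfl, rfl⟩

end Coloring

/-- `r` is a rank function for `f` on pairs below `κ`: for each `β < κ`, the map `ξ ↦ r ξ β`
increases strictly along every colour class `t_{ηβ}`. Ranks need not fill an initial segment of the
ordinals, so that restricting to a subset of `κ` preserves the notion. -/
def IsRank (f : Ordinal.{u} → Ordinal.{u} → Ordinal.{v}) (κ : Ordinal.{u})
    (r : Ordinal.{u} → Ordinal.{u} → Ordinal.{u}) : Prop :=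
  ∀ ξ η β : Ordinal, ξ < η → η < β → β < κ → f ξ β = f η β → r ξ β < r η β

section Rank

variable {f : Ordinal.{u} → Ordinal.{u} → Ordinal.{v}} {κ μ bd : Ordinal.{u}}
  {ρ : Cardinal.{u}} {r : Ordinal.{u} → Ordinal.{u} → Ordinal.{u}}

theorem IsRank.comp_strictMonoOn {E : Ordinal.{u} → Ordinal.{u}} (hr : IsRank f κ r)
    (hE : StrictMonoOn E (Iio μ)) (hEκ : MapsTo E (Iio μ) (Iio κ)) :
    IsRank (fun α β ↦ f (E α) (E β)) μ (fun α β ↦ r (E α) (E β)) :=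
  fun _ _ _ hξη hηβ hβ h ↦ hr _ _ _ (hE (hξη.trans (hηβ.trans hβ)) (hηβ.trans hβ) hξη)
    (hE (hηβ.trans hβ) hβ hηβ) (hEκ hβ) h

theorem TypeBounded.exists_isRank (hf : TypeBounded f κ bd) :
    ∃ γ < bd, ∃ r, IsRank f κ r ∧ pairImage r (Iio κ) ⊆ Iio γ := by
  obtain ⟨γ, hγ, hcls⟩ := hf
  have exists_rank (β : Ordinal.{u}) (c : Ordinal.{v}) :
      β < κ → (∃ η < β, f η β = c) → ∃ e : Ordinal.{u} → Ordinal.{u},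
        StrictMonoOn e {ξ | ξ < β ∧ f ξ β = c} ∧ MapsTo e {ξ | ξ < β ∧ f ξ β = c} (Iio γ) := by
    rintro hβ ⟨η, hη, rfl⟩
    exact (hcls η β hη hβ).exists_strictMonoOn
  choose! e he_mono he_lt using exists_rank
  refine ⟨γ, hγ, fun α β ↦ e β (f α β) α, fun ξ η β hξη hη hβ h ↦ ?_, ?_⟩
  · simpa only [h] using he_mono β (f η β) hβ ⟨η, hη, rfl⟩ ⟨hξη.trans hη, h⟩ ⟨hη, rfl⟩ hξη
  · rintro _ ⟨α, -, β, hβ, hαβ, rfl⟩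
    exact he_lt β (f α β) hβ ⟨α, hαβ, rfl⟩ ⟨hαβ, rfl⟩

theorem IsRank.typeBounded_of_mk_pairImage_lt (hr : IsRank f κ r)
    (hcard : #(pairImage r (Iio κ)) < lift.{u + 1, u} ρ) : TypeBounded f κ ρ.ord := by
  obtain ⟨γ, hγ, hle⟩ := exists_otypeLE_of_mk_lt hcard
  refine ⟨γ, hγ, fun η β _ hβ ↦ hle.of_strictMonoOn (e := fun ξ ↦ r ξ β) ?_ fun ξ hξ ↦
    mem_pairImage_Iio hξ.1 hβ⟩
  rintro ξ ⟨-, hξ⟩ ζ ⟨hζβ, hζ⟩ hξζ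
  exact hr ξ ζ β hξζ hζβ hβ (hξ.trans hζ.symm)

theorem typeBounded_ord_iff_exists_isRank :
    TypeBounded f κ ρ.ord ↔ ∃ r, IsRank f κ r ∧ #(pairImage r (Iio κ)) < lift.{u + 1, u} ρ := by
  refine ⟨fun hf ↦ ?_, fun ⟨r, hr, hcard⟩ ↦ hr.typeBounded_of_mk_pairImage_lt hcard⟩
  obtain ⟨γ, hγ, r, hr, hrγ⟩ := hf.exists_isRank
  refine ⟨r, hr, (mk_le_mk_of_subset hrγ).trans_lt ?_⟩
  rwa [Cardinal.mk_Iio_ordinal, Cardinal.lift_lt, ← Cardinal.lt_ord]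

end Rank

/-- The arrow `κ → (μ)²_{lam,<ρ}`. Colourings are total, with only their values on pairs below `κ`
constrained; `ρ` is lifted because sets of ordinals live one universe higher. -/
def PartitionArrow (κ μ : Ordinal.{u}) (lam ρ : Cardinal.{u}) : Prop :=
  ∀ g : Ordinal.{u} → Ordinal.{u} → Ordinal.{u},
    (∀ α β : Ordinal, α < β → β < κ → g α β < lam.ord) →
    ∃ A : Set Ordinal.{u}, A ⊆ Iio κ ∧ HasOType A μ ∧ #(pairImage g A) < lift.{u + 1, u} ρ

/-- The rainbow arrow `κ →^poly (θ)²_{<bd-t-bdd}`, for colourings that map pairs below `κ` into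
`κ`. -/
def PolyArrow (κ θ bd : Ordinal.{u}) : Prop :=
  ∀ f : Ordinal.{u} → Ordinal.{u} → Ordinal.{u},
    (∀ α β : Ordinal, α < β → β < κ → f α β < κ) →
    IsNormalColoring f κ → TypeBounded f κ bd →
    ∃ A : Set Ordinal.{u}, A ⊆ Iio κ ∧ HasOType A θ ∧ IsRainbow f A

section Arrow

variable {κ μ θ bd : Ordinal.{u}} {lam ρ : Cardinal.{u}}
  {f g : Ordinal.{u} → Ordinal.{u} → Ordinal.{u}}

theorem PartitionArrow.exists_strictMonoOn (h : PartitionArrow κ μ lam ρ)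
    (hg : #(pairImage g (Iio κ)) ≤ lift.{u + 1, u} lam) :
    ∃ E : Ordinal.{u} → Ordinal.{u}, StrictMonoOn E (Iio μ) ∧ MapsTo E (Iio μ) (Iio κ) ∧
      #(pairImage (fun α β ↦ g (E α) (E β)) (Iio μ)) < lift.{u + 1, u} ρ := by
  obtain ⟨j, hj, hjlam⟩ : ∃ j : Ordinal.{u} → Ordinal.{u},
      InjOn j (pairImage g (Iio κ)) ∧ MapsTo j (pairImage g (Iio κ)) (Iio lam.ord) :=
    exists_injOn_mapsTo_of_mk_le (by rwa [Cardinal.mk_Iio_ordinal, card_ord])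
  obtain ⟨A, hAκ, hA, hcard⟩ := h (fun α β ↦ j (g α β)) fun _ _ hαβ hβ ↦
    hjlam (mem_pairImage_Iio hαβ hβ)
  obtain ⟨E, hE, rfl⟩ := hA.exists_strictMonoOn_image_eq
  refine ⟨E, hE, mapsTo_iff_image_subset.2 hAκ, lt_of_le_of_lt ?_ hcard⟩
  rw [pairImage_comp, mk_image_eq_of_injOn _ _ (hj.mono (pairImage_mono hAκ))]
  exact mk_le_mk_of_subset (pairImage_subset_pairImage_image hE)

theorem PolyArrow.exists_isRainbow (h : PolyArrow κ θ bd) (hκ : ω ≤ κ)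
    (hnormal : IsNormalColoring f κ) (hbdd : TypeBounded f κ bd) :
    ∃ A : Set Ordinal.{u}, A ⊆ Iio κ ∧ HasOType A θ ∧ IsRainbow f A := by
  have hκ_card : ℵ₀ ≤ #(Iio κ) := by
    rwa [Cardinal.mk_Iio_ordinal, aleph0_le_lift, Ordinal.aleph0_le_card]
  obtain ⟨j, hj, hjκ⟩ := exists_injOn_mapsTo_of_mk_le (mk_pairImage_le (g := f) hκ_card)
  obtain ⟨A, hAκ, hA, hrainbow⟩ := h (fun α β ↦ j (f α β))
    (fun _ _ hαβ hβ ↦ hjκ (mem_pairImage_Iio hαβ hβ)) (hnormal.comp_injOn hj) (hbdd.comp_injOn hj)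
  exact ⟨A, hAκ, hA, hrainbow.of_comp⟩

end Arrow

theorem stmt5_general {κ μ θ : Ordinal.{u}} {lam ρ : Cardinal.{u}} (hμ : ω ≤ μ)
    (hpart : PartitionArrow κ μ lam ρ) (hpoly : PolyArrow μ θ ρ.ord) :
    PolyArrow κ θ (Order.succ lam).ord := by
  intro f _ hnormal hbdd
  obtain ⟨r, hr, hr_card⟩ := typeBounded_ord_iff_exists_isRank.1 hbdd
  obtain ⟨E, hE, hEκ, hrE_card⟩ := hpart.exists_strictMonoOn (g := r)
    (by rwa [Cardinal.lift_succ, Order.lt_succ_iff] at hr_card)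
  have hbddE : TypeBounded (fun α β ↦ f (E α) (E β)) μ ρ.ord :=
    typeBounded_ord_iff_exists_isRank.2 ⟨_, hr.comp_strictMonoOn hE hEκ, hrE_card⟩
  obtain ⟨B, hBμ, hB, hrainbow⟩ :=
    hpoly.exists_isRainbow hμ (hnormal.comp_strictMonoOn hE hEκ) hbddE
  exact ⟨E '' B, (hEκ.mono_left hBμ).image_subset, hB.image (hE.mono hBμ),
    hrainbow.image (hE.mono hBμ)⟩

/-- Proposition (clmcc)(1): if `κ → (μ)²_{λ,<ρ}` and `μ →^poly (θ)²_{<ρ-t-bdd}`,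
then `κ →^poly (θ)²_{<λ⁺-t-bdd}`. Here `κ, λ, μ` have uncountable cofinality. -/
theorem stmt5 (κ lam μ ρ θ : Cardinal.{0})
    (hκ : ℵ₀ < κ.ord.cof) (hlam : ℵ₀ < lam.ord.cof) (hμ : ℵ₀ < μ.ord.cof)
    (ha : ∀ f : Ordinal.{0} → Ordinal.{0} → Ordinal.{0},
      (∀ α β : Ordinal, α < β → β < κ.ord → f α β < lam.ord) →
      ∃ A : Set Ordinal.{0}, A ⊆ Set.Iio κ.ord ∧ HasOType A μ.ord ∧
        Cardinal.mk ↥{ξ : Ordinal.{0} | ∃ α ∈ A, ∃ β ∈ A, α < β ∧ f α β = ξ} <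
          Cardinal.lift.{1, 0} ρ)
    (hc : ∀ f : Ordinal.{0} → Ordinal.{0} → Ordinal.{0},
      (∀ α β : Ordinal, α < β → β < μ.ord → f α β < μ.ord) →
      IsNormalColoring f μ.ord → TypeBounded f μ.ord ρ.ord →
      ∃ A : Set Ordinal.{0}, A ⊆ Set.Iio μ.ord ∧ HasOType A θ.ord ∧ IsRainbow f A) :
    ∀ f : Ordinal.{0} → Ordinal.{0} → Ordinal.{0},
      (∀ α β : Ordinal, α < β → β < κ.ord → f α β < κ.ord) →
      IsNormalColoring f κ.ord → TypeBounded f κ.ord (Order.succ lam).ord →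
      ∃ A : Set Ordinal.{0}, A ⊆ Set.Iio κ.ord ∧ HasOType A θ.ord ∧ IsRainbow f A := by
  have hμω : ω ≤ μ.ord := aleph0_le_card.1 (hμ.le.trans (cof_le_card μ.ord))
  exact stmt5_general hμω ha hc
end
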